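/- Let X be an integer-valued random variable with finite mean μ and finite variance σ² > 0. Then H(X) ≤ 1/2 + ln( Σ_{x ∈ ℤ} e^{−(x−μ)²/(2σ²)} ), and the inequality still holds when the sum is restricted to the integer values actually taken by X. -/

import Mathlib

open MeasureTheory Real

/-!
Integrating `log t ≤ t - 1` gives Gibbs' inequality: the entropy of `p` is at most its
cross-entropy `∑ p i * -log (w i)` relative to any other probability weight `w`. For the normalized
Gaussian weight `w i = e^{-(X i - c)²/(2v)} / S`, where `v` is the second moment of `X` about `c`,
the quadratic exponent integrates to exactly `1/2`, so the cross-entropy is `1/2 + log S`. The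
weight only has to be positive where `p` is, so it may be cut off outside the support of `p`.
-/

lemma hasSum_of_tsum_eq_of_ne_zero {α ι : Type*} [AddCommMonoid α] [TopologicalSpace α]
    {f : ι → α} {a : α} (h : ∑' i, f i = a) (ha : a ≠ 0) : HasSum f a := by
  have hf : Summable f := by
    by_contra hf
    exact ha (h.symm.trans (tsum_eq_zero_of_not_summable hf))
  exact h ▸ hf.hasSum

section Gibbs

lemma negMulLog_le_mul_neg_log_add_sub {x y : ℝ} (hx : 0 ≤ x) (hy : 0 ≤ y) (hxy : y = 0 → x = 0) :
    negMulLog x ≤ x * -log y + (y - x) := by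
  rcases hx.eq_or_lt with rfl | hx
  · simpa using hy
  have hy : 0 < y := hy.lt_of_ne' fun h => hx.ne' (hxy h)
  calc negMulLog x = x * -log y + x * log (y / x) := by
        rw [log_div hy.ne' hx.ne', negMulLog]; ring
    _ ≤ x * -log y + x * (y / x - 1) := by
        gcongr; exact log_le_sub_one_of_pos (div_pos hy hx)
    _ = x * -log y + (y - x) := by field_simp

variable {ι : Type*} {p w : ι → ℝ} {a : ℝ}

lemma summable_negMulLog_of_summable_mul_neg_log (hp0 : ∀ i, 0 ≤ p i) (hp1 : ∀ i, p i ≤ 1)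
    (hp : Summable p) (hw0 : ∀ i, 0 ≤ w i) (hw : Summable w) (hpw : ∀ i, w i = 0 → p i = 0)
    (hcross : Summable fun i => p i * -log (w i)) :
    Summable fun i => negMulLog (p i) :=
  .of_nonneg_of_le (fun i => negMulLog_nonneg (hp0 i) (hp1 i))
    (fun i => negMulLog_le_mul_neg_log_add_sub (hp0 i) (hw0 i) (hpw i)) (hcross.add (hw.sub hp))

lemma tsum_negMulLog_le_of_hasSum_mul_neg_log (hp0 : ∀ i, 0 ≤ p i) (hp : HasSum p 1)
    (hw0 : ∀ i, 0 ≤ w i) (hw : Summable w) (hw1 : ∑' i, w i ≤ 1) (hpw : ∀ i, w i = 0 → p i = 0)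
    (hcross : HasSum (fun i => p i * -log (w i)) a) :
    ∑' i, negMulLog (p i) ≤ a := by
  have hp1 (i : ι) : p i ≤ 1 := le_hasSum hp i fun j _ => hp0 j
  have hentropy : Summable fun i => negMulLog (p i) :=
    summable_negMulLog_of_summable_mul_neg_log hp0 hp1 hp.summable hw0 hw hpw hcross.summable
  calc ∑' i, negMulLog (p i) ≤ a + (∑' i, w i - 1) :=
        hasSum_le (fun i => negMulLog_le_mul_neg_log_add_sub (hp0 i) (hw0 i) (hpw i))
          hentropy.hasSum (hcross.add (hw.hasSum.sub hp))
    _ ≤ a := by linarith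

lemma tsum_negMulLog_le_add_log_tsum (hp0 : ∀ i, 0 ≤ p i) (hp : HasSum p 1)
    (hw0 : ∀ i, 0 ≤ w i) (hw : Summable w) (hpw : ∀ i, w i = 0 → p i = 0)
    (hcross : HasSum (fun i => p i * -log (w i)) a) :
    ∑' i, negMulLog (p i) ≤ a + log (∑' i, w i) := by
  set S := ∑' i, w i
  obtain ⟨i₀, hi₀⟩ : ∃ i, p i ≠ 0 := by
    by_contra! h
    exact one_ne_zero (hp.unique (hasSum_zero.congr_fun h))
  have hS : 0 < S := hw.tsum_pos hw0 i₀ ((hw0 i₀).lt_of_ne' (mt (hpw i₀) hi₀))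
  have hcross_normalized : HasSum (fun i => p i * -log (w i / S)) (a + log S) := by
    have h := hcross.add (hp.mul_right (log S))
    rw [one_mul] at h
    refine h.congr_fun fun i => ?_
    by_cases hi : p i = 0
    · simp [hi]
    · rw [log_div (mt (hpw i) hi) hS.ne']; ring
  refine tsum_negMulLog_le_of_hasSum_mul_neg_log hp0 hp (fun i => div_nonneg (hw0 i) hS.le)
    (hw.div_const S) ?_ (fun i hi => hpw i ?_) hcross_normalized
  · rw [tsum_div_const, div_self hS.ne']
  · simpa [hS.ne'] using hi

lemma tsum_negMulLog_le_add_log_tsum_indicator_exp_neg {q : ι → ℝ} {T : Set ι}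
    (hp0 : ∀ i, 0 ≤ p i) (hp : HasSum p 1) (hpT : Function.support p ⊆ T)
    (hq : HasSum (fun i => p i * q i) a) (hT : Summable (T.indicator fun i => exp (-q i))) :
    ∑' i, negMulLog (p i) ≤ a + log (∑' i, T.indicator (fun i => exp (-q i)) i) := by
  refine tsum_negMulLog_le_add_log_tsum hp0 hp
    (Set.indicator_nonneg fun i _ => (exp_pos _).le) hT (fun i hi => ?_) ?_
  · by_contra hpi
    rw [Set.indicator_of_mem (hpT hpi)] at hi
    exact exp_ne_zero _ hi
  · refine hq.congr_fun fun i => ?_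
    by_cases hpi : p i = 0
    · simp [hpi]
    · rw [Set.indicator_of_mem (hpT hpi), log_exp, neg_neg]

end Gibbs

lemma summable_exp_neg_int_sub_sq_div (c : ℝ) {v : ℝ} (hv : 0 < v) :
    Summable fun k : ℤ => exp (-((k : ℝ) - c) ^ 2 / (2 * v)) := by
  -- the scale `t` at which the kernel's terms `e^{-π (k - c)² t}` become the Gaussian ones
  have ht : 0 < 1 / (2 * π * v) := by positivity
  refine (HurwitzZeta.hasSum_int_evenKernel (-c) ht).summable.congr fun k => ?_
  congr 1
  field_simp
  ring

theorem entropy_le_gaussian_sum_general {ι : Type*} {p X : ι → ℝ} {T : Set ι} {c v : ℝ}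
    (hp0 : ∀ i, 0 ≤ p i) (hp : HasSum p 1) (hpT : Function.support p ⊆ T)
    (hX : HasSum (fun i => (X i - c) ^ 2 * p i) v) (hv : 0 < v)
    (hT : Summable (T.indicator fun i => exp (-(X i - c) ^ 2 / (2 * v)))) :
    ∑' i, p i * log (1 / p i) ≤
      1 / 2 + log (∑' i, T.indicator (fun i => exp (-(X i - c) ^ 2 / (2 * v))) i) := by
  have hentropy (i : ι) : p i * log (1 / p i) = negMulLog (p i) := by
    rw [one_div, log_inv, negMulLog, neg_mul, mul_neg]
  have hexponent : HasSum (fun i => p i * ((X i - c) ^ 2 / (2 * v))) (1 / 2) := by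
    have h := hX.div_const (2 * v)
    rw [show v / (2 * v) = 1 / 2 by field_simp] at h
    exact h.congr_fun fun i => by ring
  simp only [hentropy, neg_div] at hT ⊢
  exact tsum_negMulLog_le_add_log_tsum_indicator_exp_neg hp0 hp hpT hexponent hT

/-- If `X` is integer-valued with finite mean `μ` and finite variance `σ² > 0`, then
`H(X) ≤ 1/2 + ln(Σ_{x∈ℤ} e^{-(x-μ)²/(2σ²)})`, and the inequality still holds when the
sum is restricted to the integer values actually taken by `X`. -/
theorem entropy_le_gaussian_sum
    (p : ℤ → ℝ) (hp0 : ∀ k, 0 ≤ p k) (hp1 : ∑' k, p k = 1)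
    (μ : ℝ) (hμ : μ = ∑' k : ℤ, (k : ℝ) * p k)
    (hμs : Summable (fun k : ℤ => (k : ℝ) * p k))
    (σ2 : ℝ) (hσ2 : σ2 = ∑' k : ℤ, ((k : ℝ) - μ) ^ 2 * p k)
    (hσ2s : Summable (fun k : ℤ => ((k : ℝ) - μ) ^ 2 * p k)) (hσ2pos : 0 < σ2) :
    (∑' k, p k * Real.log (1 / p k)) ≤
      1 / 2 + Real.log (∑' k : ℤ, Real.exp (-((k : ℝ) - μ) ^ 2 / (2 * σ2))) ∧
    (∑' k, p k * Real.log (1 / p k)) ≤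
      1 / 2 + Real.log (∑' k : ℤ, Set.indicator {j : ℤ | p j ≠ 0}
        (fun j => Real.exp (-((j : ℝ) - μ) ^ 2 / (2 * σ2))) k) := by
  have hbound (T : Set ℤ) (hpT : Function.support p ⊆ T) :=
    entropy_le_gaussian_sum_general hp0 (hasSum_of_tsum_eq_of_ne_zero hp1 one_ne_zero) hpT
      (hσ2s.hasSum_iff.2 hσ2.symm) hσ2pos ((summable_exp_neg_int_sub_sq_div μ hσ2pos).indicator T)
  exact ⟨by simpa only [Set.indicator_univ] using hbound Set.univ (Set.subset_univ _),
    hbound {j | p j ≠ 0} subset_rfl⟩
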